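/- Let S = {S_1,…,S_K} ⊂ ℂ^{d×d} and let μ_* be a θ-ergodic Borel probability measure on Σ_K^+ extremal for S. Then there exist a nonsingular matrix P ∈ ℂ^{d×d}, an integer r with 1 ≤ r ≤ d, and positive integers d_1,…,d_r with d_1 + ⋯ + d_r = d, such that each conjugate P^{-1} S_k P is block lower-triangular with diagonal blocks S̃_k^{(1)},…,S̃_k^{(r)} of sizes d_1×d_1,…,d_r×d_r respectively, each family S̃(j) = {S̃_1^{(j)},…,S̃_K^{(j)}} ⊂ ℂ^{d_j×d_j} is irreducible, and for some 1 ≤ j ≤ r one has ρ(S) = ρ(S̃(j)) and μ_* is also extremal for S̃(j). -/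

import Mathlib

open Filter MeasureTheory Topology
open scoped ENNReal

noncomputable section

/-- The one-sided shift on `Σ_K^+ = ℕ → Fin K`. -/
def shift (K : ℕ) : (ℕ → Fin K) → ℕ → Fin K := fun i n => i (n + 1)

/-- The ordered product `S_{w 0} ⋯ S_{w (n-1)}` along a finite word `w`. -/
def finWordProd {d K : ℕ} (S : Fin K → Matrix (Fin d) (Fin d) ℂ) {n : ℕ}
    (w : Fin n → Fin K) : Matrix (Fin d) (Fin d) ℂ :=
  (List.ofFn fun t => S (w t)).prod

/-- The ordered product of the first `n` matrices along an infinite sequence. -/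
def wordProd {d K : ℕ} (S : Fin K → Matrix (Fin d) (Fin d) ℂ)
    (i : ℕ → Fin K) (n : ℕ) : Matrix (Fin d) (Fin d) ℂ :=
  (List.ofFn fun t : Fin n => S (i t)).prod

/-- The (usual) spectral radius of a complex matrix, as a real number. -/
def specRad {d : ℕ} (A : Matrix (Fin d) (Fin d) ℂ) : ℝ :=
  (spectralRadius ℂ A).toReal

/-- The generalized spectral radius of a finite family of matrices. -/
def genSpecRad {d K : ℕ} (S : Fin K → Matrix (Fin d) (Fin d) ℂ) : ℝ :=
  Filter.atTop.limsup fun n : ℕ =>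
    ⨆ w : Fin n → Fin K, specRad (finWordProd S w) ^ ((n : ℝ)⁻¹)

/-- A submultiplicative matrix norm on `d × d` complex matrices. -/
structure MatrixNorm (d : ℕ) where
  N : Matrix (Fin d) (Fin d) ℂ → ℝ
  nonneg : ∀ A, 0 ≤ N A
  definite : ∀ A, N A = 0 ↔ A = 0
  homog : ∀ (c : ℂ) (A), N (c • A) = ‖c‖ * N A
  triangle : ∀ A B, N (A + B) ≤ N A + N B
  submult : ∀ A B, N (A * B) ≤ N A * N B

/-- `μ` is extremal for `S` (w.r.t. the matrix norm `N`). -/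
def IsExtremal {d K : ℕ} (S : Fin K → Matrix (Fin d) (Fin d) ℂ)
    (N : Matrix (Fin d) (Fin d) ℂ → ℝ) (μ : Measure (ℕ → Fin K)) : Prop :=
  ∀ᵐ i ∂μ, Tendsto (fun n : ℕ => N (wordProd S i n) ^ ((n : ℝ)⁻¹))
    atTop (𝓝 (genSpecRad S))

/-- `x` is a density point of `μ`. -/
def DensityPoint {K : ℕ} (μ : Measure (ℕ → Fin K)) (x : ℕ → Fin K) : Prop :=
  ∀ U : Set (ℕ → Fin K), IsOpen U → x ∈ U → 0 < μ U

/-- `S` has the spectral finiteness property. -/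
def HasFinitenessProperty {d K : ℕ} (S : Fin K → Matrix (Fin d) (Fin d) ℂ) : Prop :=
  ∃ n : ℕ, 1 ≤ n ∧ ∃ w : Fin n → Fin K,
    genSpecRad S = specRad (finWordProd S w) ^ ((n : ℝ)⁻¹)

/-- `x` is periodic of period `π ≥ 1`. -/
def IsPeriodic {K : ℕ} (x : ℕ → Fin K) (π : ℕ) : Prop :=
  1 ≤ π ∧ ∀ n, x (n + π) = x n

/-- A family of `m × m` complex matrices is irreducible if the only common invariant
subspaces of `ℂ^m` are `{0}` and `ℂ^m`. -/
def IrreducibleFamily {m K : ℕ} (F : Fin K → Matrix (Fin m) (Fin m) ℂ) : Prop :=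
  ∀ W : Submodule ℂ (Fin m → ℂ),
    (∀ k, ∀ x ∈ W, (F k).mulVec x ∈ W) → W = ⊥ ∨ W = ⊤

/-!
Conjugate the family to block lower triangular form along a composition series of `ℂ^d`, so that
the diagonal blocks are irreducible. An irreducible family spans the full matrix algebra
(Burnside), so all entries of its products are traces of products, hence bounded by the spectral
radius: products of length `n` are `O(r ^ n)` for every `r` above the generalized spectral radius.

It remains to find a block whose products grow along `μ`-almost every sequence as fast as those of
`S`. By ergodicity each block either does so or almost surely has, for some `t < ρ(S)`, a product of
some length `m` of norm at most `t ^ m`. If the latter held for every block, cutting orbits greedily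
into such stretches would bound all diagonal blocks at once by the cocycle of one weight function
which is rarely different from `t`. A diagonal conjugation makes the part below the diagonal as
small as we like, so the bound passes to `S` with an arbitrarily small loss in the rate,
contradicting extremality.
-/

open scoped Matrix.Norms.Operator

/-! ### Irreducible families and Burnside's theorem -/

/-- A family of endomorphisms is irreducible if `0` and `V` are its only common invariant
subspaces. This is the coordinate-free form of `IrreducibleFamily`; like it, it admits `V = 0`. -/
def ActsIrreducibly {k V κ : Type*} [Field k] [AddCommGroup V] [Module k V]
    (S : κ → Module.End k V) : Prop :=
  ∀ W : Submodule k V, (∀ i, W ∈ (S i).invtSubmodule) → W = ⊥ ∨ W = ⊤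

theorem irreducibleFamily_iff_actsIrreducibly {m K : ℕ} {F : Fin K → Matrix (Fin m) (Fin m) ℂ} :
    IrreducibleFamily F ↔ ActsIrreducibly fun k => Matrix.toLinAlgEquiv' (F k) := Iff.rfl

theorem ActsIrreducibly.of_linearEquiv {k V V' κ : Type*} [Field k] [AddCommGroup V] [Module k V]
    [AddCommGroup V'] [Module k V'] {S : κ → Module.End k V} {S' : κ → Module.End k V'}
    (hS : ActsIrreducibly S) (e : V ≃ₗ[k] V') (he : ∀ i v, e (S i v) = S' i (e v)) :
    ActsIrreducibly S' := by
  intro W hW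
  have hmem : ∀ i, W.comap e.toLinearMap ∈ (S i).invtSubmodule := fun i v hv => by
    simpa [he] using hW i hv
  have hmap := Submodule.map_comap_eq_of_surjective (f := e.toLinearMap) e.surjective W
  refine (hS _ hmem).imp (fun h => ?_) fun h => ?_ <;> rw [← hmap, h]
  · exact Submodule.map_bot _
  · exact Submodule.map_top _ |>.trans e.range

theorem adjoin_range_toSubmodule_eq_span_list_prod {R A κ : Type*} [CommSemiring R] [Semiring A]
    [Algebra R A] (S : κ → A) :
    (Algebra.adjoin R (Set.range S)).toSubmodule =
      Submodule.span R (Set.range fun l : List κ => (l.map S).prod) := by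
  rw [Algebra.adjoin_eq_span, ← FreeMonoid.mrange_lift, MonoidHom.coe_mrange,
    ← FreeMonoid.toList.surjective.range_comp]
  exact congrArg (fun f => Submodule.span R (Set.range f)) (funext <| FreeMonoid.lift_apply S)

theorem subalgebra_eq_top_of_isSimpleModule {k V : Type*} [Field k] [IsAlgClosed k]
    [AddCommGroup V] [Module k V] [FiniteDimensional k V]
    (A : Subalgebra k (Module.End k V)) [IsSimpleModule A V] : A = ⊤ := by
  -- By Schur's lemma `End_A V = k`, so the density theorem applies to every `k`-linear map.
  have schur := (IsSimpleModule.algebraMap_end_bijective_of_isAlgClosed (A := A) (V := V) k).2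
  refine eq_top_iff.2 fun g _ => ?_
  let g' : Module.End (Module.End A V) V :=
    { toFun := g
      map_add' := g.map_add
      map_smul' := fun φ v => by
        obtain ⟨c, rfl⟩ := schur φ
        simp }
  obtain ⟨s, hs⟩ := Module.Finite.fg_top (R := k) (M := V)
  obtain ⟨a, ha⟩ := jacobson_density g' s
  have : g = a := LinearMap.ext_on (s := (s : Set V)) hs fun v hv => ha v hv
  exact this ▸ a.2

theorem ActsIrreducibly.adjoin_range_eq_top {k V κ : Type*} [Field k] [IsAlgClosed k]
    [AddCommGroup V] [Module k V] [FiniteDimensional k V] {S : κ → Module.End k V}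
    (hS : ActsIrreducibly S) : Algebra.adjoin k (Set.range S) = ⊤ := by
  rcases subsingleton_or_nontrivial V with _ | _
  · exact eq_top_iff.2 fun g _ => Subsingleton.elim 0 g ▸ zero_mem _
  have : IsSimpleModule (Algebra.adjoin k (Set.range S)) V := by
    rw [isSimpleModule_iff]
    refine ⟨fun W => ?_⟩
    simpa using hS (W.restrictScalars k) fun i v hv =>
      W.smul_mem (⟨S i, Algebra.subset_adjoin ⟨i, rfl⟩⟩ : Algebra.adjoin k (Set.range S)) hv
  exact subalgebra_eq_top_of_isSimpleModule _

theorem IrreducibleFamily.span_list_prod_eq_top {m K : ℕ} {F : Fin K → Matrix (Fin m) (Fin m) ℂ}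
    (hF : IrreducibleFamily F) :
    Submodule.span ℂ (Set.range fun l : List (Fin K) => (l.map F).prod) = ⊤ := by
  have h := (irreducibleFamily_iff_actsIrreducibly.1 hF).adjoin_range_eq_top
  rw [Set.range_comp' Matrix.toLinAlgEquiv' F, ← AlgEquiv.coe_toAlgHom, ← AlgHom.map_adjoin] at h
  refine eq_top_iff.2 fun X _ => ?_
  obtain ⟨Y, hY, hYX⟩ : Matrix.toLinAlgEquiv' X ∈ Subalgebra.map _ _ := h ▸ Algebra.mem_top
  rw [← adjoin_range_toSubmodule_eq_span_list_prod, ← Matrix.toLinAlgEquiv'.injective hYX]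
  exact hY

/-! ### The generalized spectral radius -/

theorem norm_one_matrix_le_one {ι : Type*} [Fintype ι] [DecidableEq ι] :
    ‖(1 : Matrix ι ι ℂ)‖ ≤ 1 := by
  rcases isEmpty_or_nonempty ι with _ | _
  · exact (norm_of_subsingleton _).trans_le zero_le_one
  · exact norm_one.le

theorem norm_list_map_prod_le_pow {ι κ : Type*} [Fintype ι] [DecidableEq ι]
    {S : κ → Matrix ι ι ℂ} {M : ℝ} (hS : ∀ k, ‖S k‖ ≤ M) (l : List κ) :
    ‖(l.map S).prod‖ ≤ M ^ l.length := by
  induction l with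
  | nil => simpa using norm_one_matrix_le_one
  | cons k l ih =>
    simp only [List.map_cons, List.prod_cons, List.length_cons, pow_succ']
    exact norm_mul_le_of_le (hS k) ih

theorem exists_one_le_forall_norm_le {ι E : Type*} [Finite ι] [Norm E] (S : ι → E) :
    ∃ M : ℝ, 1 ≤ M ∧ ∀ k, ‖S k‖ ≤ M :=
  let ⟨M, hM⟩ := (Set.finite_range fun k => ‖S k‖).bddAbove
  ⟨max 1 M, le_max_left _ _, fun k => (hM ⟨k, rfl⟩).trans (le_max_right _ _)⟩

section GenSpecRad

variable {d e m K : ℕ}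

theorem finWordProd_eq_list_map_prod {n : ℕ} (S : Fin K → Matrix (Fin d) (Fin d) ℂ)
    (w : Fin n → Fin K) : finWordProd S w = ((List.ofFn w).map S).prod := by
  simp [finWordProd, List.map_ofFn, Function.comp_def]

theorem specRad_nonneg (A : Matrix (Fin d) (Fin d) ℂ) : 0 ≤ specRad A :=
  ENNReal.toReal_nonneg

theorem spectralRadius_le_ofReal_norm (A : Matrix (Fin d) (Fin d) ℂ) :
    spectralRadius ℂ A ≤ ENNReal.ofReal ‖A‖ := by
  rcases isEmpty_or_nonempty (Fin d) with _ | _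
  · simp [spectrum.SpectralRadius.of_subsingleton]
  · rw [ofReal_norm]
    exact spectrum.spectralRadius_le_nnnorm A

theorem specRad_le_norm (A : Matrix (Fin d) (Fin d) ℂ) : specRad A ≤ ‖A‖ :=
  ENNReal.toReal_le_of_le_ofReal (norm_nonneg _) (spectralRadius_le_ofReal_norm A)

theorem spectralRadius_ne_top (A : Matrix (Fin d) (Fin d) ℂ) : spectralRadius ℂ A ≠ ⊤ :=
  ne_top_of_le_ne_top ENNReal.ofReal_ne_top (spectralRadius_le_ofReal_norm A)

theorem specRad_mono {A : Matrix (Fin d) (Fin d) ℂ} {B : Matrix (Fin e) (Fin e) ℂ}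
    (h : spectrum ℂ A ⊆ spectrum ℂ B) : specRad A ≤ specRad B :=
  ENNReal.toReal_mono (spectralRadius_ne_top B) (biSup_mono h)

theorem norm_le_specRad_of_mem_spectrum {A : Matrix (Fin d) (Fin d) ℂ} {z : ℂ}
    (hz : z ∈ spectrum ℂ A) : ‖z‖ ≤ specRad A :=
  ENNReal.toReal_mono (spectralRadius_ne_top A) (le_biSup (fun k : ℂ => (‖k‖₊ : ℝ≥0∞)) hz)

theorem norm_trace_le_mul_specRad (A : Matrix (Fin d) (Fin d) ℂ) : ‖A.trace‖ ≤ d * specRad A := by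
  have hroots : ∀ x ∈ A.charpoly.roots.map fun z => ‖z‖, x ≤ specRad A := fun x hx => by
    obtain ⟨z, hz, rfl⟩ := Multiset.mem_map.1 hx
    exact norm_le_specRad_of_mem_spectrum
      (Matrix.mem_spectrum_iff_isRoot_charpoly.2 (Polynomial.isRoot_of_mem_roots hz))
  have hcard : (A.charpoly.roots.map fun z => ‖z‖).card ≤ d := by
    simpa using Polynomial.card_roots' A.charpoly
  calc ‖A.trace‖ ≤ (A.charpoly.roots.map fun z => ‖z‖).sum := by
        rw [Matrix.trace_eq_sum_roots_charpoly]; exact norm_multiset_sum_le _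
    _ ≤ (A.charpoly.roots.map fun z => ‖z‖).card • specRad A :=
        Multiset.sum_le_card_nsmul _ _ hroots
    _ ≤ d * specRad A := by
        rw [nsmul_eq_mul]
        exact mul_le_mul_of_nonneg_right (mod_cast hcard) (specRad_nonneg A)

theorem specRad_finWordProd_rpow_inv_le {S : Fin K → Matrix (Fin d) (Fin d) ℂ} {M : ℝ}
    (hM : 1 ≤ M) (hS : ∀ k, ‖S k‖ ≤ M) {n : ℕ} (w : Fin n → Fin K) :
    specRad (finWordProd S w) ^ (n : ℝ)⁻¹ ≤ M := by
  rcases Nat.eq_zero_or_pos n with rfl | hn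
  · simpa using hM
  · rw [Real.rpow_inv_le_iff_of_pos (specRad_nonneg _) (by linarith) (by positivity),
      Real.rpow_natCast, finWordProd_eq_list_map_prod]
    simpa using (specRad_le_norm _).trans (norm_list_map_prod_le_pow hS (List.ofFn w))

theorem iSup_specRad_rpow_inv_nonneg (S : Fin K → Matrix (Fin d) (Fin d) ℂ) (n : ℕ) :
    0 ≤ ⨆ w : Fin n → Fin K, specRad (finWordProd S w) ^ (n : ℝ)⁻¹ :=
  Real.iSup_nonneg fun _ => Real.rpow_nonneg (specRad_nonneg _) _

theorem isBoundedUnder_iSup_specRad_rpow_inv (S : Fin K → Matrix (Fin d) (Fin d) ℂ) :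
    atTop.IsBoundedUnder (· ≤ ·) fun n : ℕ =>
      ⨆ w : Fin n → Fin K, specRad (finWordProd S w) ^ (n : ℝ)⁻¹ := by
  obtain ⟨M, hM, hS⟩ := exists_one_le_forall_norm_le S
  exact isBoundedUnder_of
    ⟨M, fun n => Real.iSup_le (specRad_finWordProd_rpow_inv_le hM hS) (by linarith)⟩

theorem genSpecRad_nonneg (S : Fin K → Matrix (Fin d) (Fin d) ℂ) : 0 ≤ genSpecRad S :=
  le_limsup_of_frequently_le (Frequently.of_forall (iSup_specRad_rpow_inv_nonneg S))
    (isBoundedUnder_iSup_specRad_rpow_inv S)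

theorem genSpecRad_mono {S : Fin K → Matrix (Fin d) (Fin d) ℂ}
    {T : Fin K → Matrix (Fin e) (Fin e) ℂ}
    (h : ∀ l : List (Fin K), spectrum ℂ (l.map S).prod ⊆ spectrum ℂ (l.map T).prod) :
    genSpecRad S ≤ genSpecRad T := by
  refine limsup_le_limsup (Eventually.of_forall fun n => ?_)
    (isBoundedUnder_of ⟨0, iSup_specRad_rpow_inv_nonneg S⟩).isCoboundedUnder_le
    (isBoundedUnder_iSup_specRad_rpow_inv T)
  refine ciSup_mono (Set.finite_range _).bddAbove fun w => ?_
  refine Real.rpow_le_rpow (specRad_nonneg _) (specRad_mono ?_) (by positivity)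
  simpa only [finWordProd_eq_list_map_prod] using h _

theorem isBigO_specRad_list_map_prod {S : Fin K → Matrix (Fin d) (Fin d) ℂ} {r : ℝ}
    (hr : genSpecRad S < r) :
    (fun l : List (Fin K) => specRad (l.map S).prod) =O[⊤] fun l => r ^ l.length := by
  have hr0 : 0 < r := (genSpecRad_nonneg S).trans_lt hr
  obtain ⟨N, hN⟩ := eventually_atTop.1
    (eventually_lt_of_limsup_lt hr (isBoundedUnder_iSup_specRad_rpow_inv S))
  have hlong : ∀ l : List (Fin K), N + 1 ≤ l.length → specRad (l.map S).prod ≤ r ^ l.length := by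
    intro l hl
    have hsup := (le_ciSup (f := fun w : Fin l.length → Fin K =>
      specRad (finWordProd S w) ^ (l.length : ℝ)⁻¹) (Set.finite_range _).bddAbove l.get).trans
      (hN l.length (by omega)).le
    rwa [finWordProd_eq_list_map_prod, List.ofFn_get,
      Real.rpow_inv_le_iff_of_pos (specRad_nonneg _) hr0.le (by norm_cast; omega),
      Real.rpow_natCast] at hsup
  have hcofinite : (fun l : List (Fin K) => specRad (l.map S).prod) =O[cofinite]
      fun l => r ^ l.length := by
    refine .of_bound 1 ((List.finite_length_lt (Fin K) (N + 1)).subset fun l hl => ?_)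
    by_contra hlen
    refine hl ?_
    simpa [abs_of_nonneg, specRad_nonneg, hr0.le] using hlong l (not_lt.1 hlen)
  rw [Asymptotics.isBigO_top]
  exact (Asymptotics.isBigO_cofinite_iff fun l h => absurd h (pow_ne_zero _ hr0.ne')).1 hcofinite

/-! ### The Berger–Wang bound for irreducible families -/

theorem IrreducibleFamily.isBigO_trace_list_map_prod_mul {F : Fin K → Matrix (Fin m) (Fin m) ℂ}
    (hF : IrreducibleFamily F) {r : ℝ} (hr : genSpecRad F < r) (X : Matrix (Fin m) (Fin m) ℂ) :
    (fun l : List (Fin K) => ((l.map F).prod * X).trace) =O[⊤] fun l => r ^ l.length := by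
  have hX : X ∈ Submodule.span ℂ (Set.range fun l : List (Fin K) => (l.map F).prod) :=
    hF.span_list_prod_eq_top ▸ Submodule.mem_top
  induction hX using Submodule.span_induction with
  | mem X hX =>
    obtain ⟨w, rfl⟩ := hX
    calc (fun l : List (Fin K) => ((l.map F).prod * (w.map F).prod).trace)
        =O[⊤] fun l => specRad ((l ++ w).map F).prod := by
          refine .of_bound m (Eventually.of_forall fun l => ?_)
          rw [List.map_append, List.prod_append, Real.norm_of_nonneg (specRad_nonneg _)]
          exact norm_trace_le_mul_specRad _
      _ =O[⊤] fun l => r ^ (l ++ w).length :=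
          (isBigO_specRad_list_map_prod hr).comp_tendsto (k := (· ++ w)) tendsto_top
      _ =O[⊤] fun l => r ^ l.length := by
          simp only [List.length_append, pow_add, mul_comm _ (r ^ w.length)]
          exact Asymptotics.isBigO_const_mul_self _ _ _
  | zero =>
    simp only [mul_zero, Matrix.trace_zero]
    exact Asymptotics.isBigO_zero _ _
  | add X Y _ _ hX hY =>
    simp only [mul_add, Matrix.trace_add]
    exact hX.add hY
  | smul c X _ hX =>
    simp only [Matrix.mul_smul, Matrix.trace_smul]
    exact hX.const_smul_left c

theorem IrreducibleFamily.isBigO_list_map_prod {F : Fin K → Matrix (Fin m) (Fin m) ℂ}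
    (hF : IrreducibleFamily F) {r : ℝ} (hr : genSpecRad F < r) :
    (fun l : List (Fin K) => (l.map F).prod) =O[⊤] fun l => r ^ l.length := by
  have hentry (l : List (Fin K)) (i j : Fin m) :
      (l.map F).prod i j = ((l.map F).prod * Matrix.single j i 1).trace := by
    simp [Matrix.trace_mul_single]
  have hsum (l : List (Fin K)) : (l.map F).prod = ∑ i, ∑ j,
      ((l.map F).prod * Matrix.single j i 1).trace • Matrix.single i j (1 : ℂ) := by
    simp only [← hentry, Matrix.smul_single, smul_eq_mul, mul_one]
    exact Matrix.matrix_eq_sum_single _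
  refine .congr_left (.fun_sum fun i _ => .fun_sum fun j _ => ?_) fun l => (hsum l).symm
  simpa using (hF.isBigO_trace_list_map_prod_mul hr (Matrix.single j i 1)).smul
    (Asymptotics.isBigO_const_const (Matrix.single i j (1 : ℂ)) (one_ne_zero (α := ℝ)) ⊤)

end GenSpecRad

/-! ### Block triangularization with irreducible diagonal blocks -/

section BlockTriangularization

variable {k V κ : Type*} [Field k] [AddCommGroup V] [Module k V]

/-- Splits off the summand `0`; a dependent analogue of `finSumFinEquiv` for prepending a block. -/
def sumSigmaFinSuccEquiv {r : ℕ} (α : Fin (r + 1) → Type*) :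
    (Σ j : Fin r, α j.succ) ⊕ α 0 ≃ Σ j, α j where
  toFun := Sum.elim (fun x => ⟨x.1.succ, x.2⟩) fun a => ⟨0, a⟩
  invFun x := Fin.cases (motive := fun j => α j → (Σ j : Fin r, α j.succ) ⊕ α 0)
    Sum.inr (fun j a => Sum.inl ⟨j, a⟩) x.1 x.2
  left_inv := by rintro (⟨j, a⟩ | a) <;> rfl
  right_inv := by
    rintro ⟨j, a⟩
    cases j using Fin.cases <;> rfl

theorem ActsIrreducibly.mapQ_of_maximal {S : κ → Module.End k V} {W : Submodule k V}
    (hW : ∀ i, W ∈ (S i).invtSubmodule)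
    (hmax : ∀ U : Submodule k V, (∀ i, U ∈ (S i).invtSubmodule) → W < U → U = ⊤) :
    ActsIrreducibly fun i => W.mapQ W (S i) (hW i) := by
  intro U hU
  have hinv : ∀ i, U.comap W.mkQ ∈ (S i).invtSubmodule := fun i v hv => hU i hv
  have hmap : (U.comap W.mkQ).map W.mkQ = U :=
    Submodule.map_comap_eq_of_surjective W.mkQ_surjective U
  rcases (Submodule.le_comap_mkQ W U).eq_or_lt with h | h
  · left; rw [← hmap, ← h, Submodule.mkQ_map_self]
  · right; rw [← hmap, hmax _ hinv h, Submodule.map_top, Submodule.range_mkQ]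

theorem ActsIrreducibly.toMatrix {ι : Type*} [Fintype ι] [DecidableEq ι]
    {S : κ → Module.End k V} (hS : ActsIrreducibly S) (b : Module.Basis ι k V) :
    ActsIrreducibly fun i => Matrix.toLinAlgEquiv' (LinearMap.toMatrix b b (S i)) :=
  hS.of_linearEquiv b.equivFun fun i v => by
    simp [Matrix.toLinAlgEquiv'_apply, LinearMap.toMatrix_mulVec_repr, Module.Basis.equivFun_apply]

variable {r : ℕ} {α : Fin (r + 1) → Type*} {W : Submodule k V}

/-- The basis of `V` assembled from a basis of the quotient `V ⧸ W`, which becomes the first block,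
and a basis of `W`, which supplies the remaining ones. -/
def basisSigmaOfQuotient (bW : Module.Basis (Σ j : Fin r, α j.succ) k W)
    (bQ : Module.Basis (α 0) k (V ⧸ W)) : Module.Basis (Σ j, α j) k V :=
  (bW.sumQuot bQ).reindex (sumSigmaFinSuccEquiv α)

section

variable (bW : Module.Basis (Σ j : Fin r, α j.succ) k W) (bQ : Module.Basis (α 0) k (V ⧸ W))

theorem basisSigmaOfQuotient_succ (j : Fin r) (b : α j.succ) :
    basisSigmaOfQuotient bW bQ ⟨j.succ, b⟩ = bW ⟨j, b⟩ := by
  rw [basisSigmaOfQuotient, Module.Basis.reindex_apply]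
  exact bW.sumQuot_inl bQ ⟨j, b⟩

theorem mkQ_basisSigmaOfQuotient_zero (b : α 0) :
    W.mkQ (basisSigmaOfQuotient bW bQ ⟨0, b⟩) = bQ b := by
  rw [basisSigmaOfQuotient, Module.Basis.reindex_apply]
  exact bW.sumQuot_inr bQ b

theorem basisSigmaOfQuotient_repr_zero (v : V) (a : α 0) :
    (basisSigmaOfQuotient bW bQ).repr v ⟨0, a⟩ = bQ.repr (W.mkQ v) a := by
  rw [basisSigmaOfQuotient, Module.Basis.repr_reindex_apply]
  exact bW.sumQuot_repr_inr bQ v a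

theorem basisSigmaOfQuotient_repr_succ (w : W) (j : Fin r) (a : α j.succ) :
    (basisSigmaOfQuotient bW bQ).repr (w : V) ⟨j.succ, a⟩ = bW.repr w ⟨j, a⟩ := by
  rw [basisSigmaOfQuotient, Module.Basis.repr_reindex_apply]
  exact bW.sumQuot_repr_inl bQ w ⟨j, a⟩

variable [∀ j, Fintype (α j)] [∀ j, DecidableEq (α j)]

theorem blockDiag'_toMatrix_basisSigmaOfQuotient_zero {f : Module.End k V}
    (hf : W ∈ f.invtSubmodule) :
    (LinearMap.toMatrix (basisSigmaOfQuotient bW bQ) (basisSigmaOfQuotient bW bQ) f).blockDiag' 0 =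
      LinearMap.toMatrix bQ bQ (W.mapQ W f hf) := by
  ext a b
  rw [Matrix.blockDiag'_apply, LinearMap.toMatrix_apply, LinearMap.toMatrix_apply,
    basisSigmaOfQuotient_repr_zero, ← mkQ_basisSigmaOfQuotient_zero bW bQ b]
  rfl

theorem toMatrix_basisSigmaOfQuotient_succ_succ {f : Module.End k V}
    (hf : W ∈ f.invtSubmodule) (i j : Fin r) (a : α i.succ) (b : α j.succ) :
    LinearMap.toMatrix (basisSigmaOfQuotient bW bQ) (basisSigmaOfQuotient bW bQ) f
      ⟨i.succ, a⟩ ⟨j.succ, b⟩ = LinearMap.toMatrix bW bW (f.restrict hf) ⟨i, a⟩ ⟨j, b⟩ := by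
  rw [LinearMap.toMatrix_apply, LinearMap.toMatrix_apply, basisSigmaOfQuotient_succ,
    ← basisSigmaOfQuotient_repr_succ bW bQ]
  rfl

theorem blockDiag'_toMatrix_basisSigmaOfQuotient_succ {f : Module.End k V}
    (hf : W ∈ f.invtSubmodule) (j : Fin r) :
    (LinearMap.toMatrix (basisSigmaOfQuotient bW bQ) (basisSigmaOfQuotient bW bQ) f).blockDiag'
      j.succ = (LinearMap.toMatrix bW bW (f.restrict hf)).blockDiag' j := by
  ext a b
  exact toMatrix_basisSigmaOfQuotient_succ_succ bW bQ hf j j a b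

theorem blockTriangular_toMatrix_basisSigmaOfQuotient {f : Module.End k V}
    (hf : W ∈ f.invtSubmodule)
    (htri : (LinearMap.toMatrix bW bW (f.restrict hf)).BlockTriangular
      fun x => OrderDual.toDual x.1) :
    (LinearMap.toMatrix (basisSigmaOfQuotient bW bQ) (basisSigmaOfQuotient bW bQ) f).BlockTriangular
      fun x => OrderDual.toDual x.1 := by
  rintro ⟨i, a⟩ ⟨j, b⟩ (hlt : i < j)
  cases j using Fin.cases with
  | zero => exact absurd hlt (Fin.not_lt_zero _)
  | succ j =>
    cases i using Fin.cases with
    | zero =>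
      have hmem : f (bW ⟨j, b⟩) ∈ W := hf (bW ⟨j, b⟩).2
      rw [LinearMap.toMatrix_apply, basisSigmaOfQuotient_succ, basisSigmaOfQuotient_repr_zero,
        Submodule.mkQ_apply, (Submodule.Quotient.mk_eq_zero W).2 hmem, map_zero, Finsupp.zero_apply]
    | succ i =>
      rw [toMatrix_basisSigmaOfQuotient_succ_succ bW bQ hf]
      exact htri (Fin.succ_lt_succ_iff.1 hlt)

theorem actsIrreducibly_blockDiag'_toMatrix_basisSigmaOfQuotient {S : κ → Module.End k V}
    (hW : ∀ i, W ∈ (S i).invtSubmodule)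
    (hQ : ActsIrreducibly fun i => W.mapQ W (S i) (hW i))
    (hirr : ∀ j, ActsIrreducibly fun i => Matrix.toLinAlgEquiv'
      ((LinearMap.toMatrix bW bW ((S i).restrict (hW i))).blockDiag' j)) (j : Fin (r + 1)) :
    ActsIrreducibly fun i => Matrix.toLinAlgEquiv' ((LinearMap.toMatrix
      (basisSigmaOfQuotient bW bQ) (basisSigmaOfQuotient bW bQ) (S i)).blockDiag' j) := by
  cases j using Fin.cases with
  | zero =>
    simp only [blockDiag'_toMatrix_basisSigmaOfQuotient_zero bW bQ (hW _)]
    exact hQ.toMatrix bQ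
  | succ j =>
    simp only [blockDiag'_toMatrix_basisSigmaOfQuotient_succ bW bQ (hW _)]
    exact hirr j

end

theorem exists_maximal_invariant_submodule [FiniteDimensional k V] [Nontrivial V]
    (S : κ → Module.End k V) :
    ∃ W : Submodule k V, (∀ i, W ∈ (S i).invtSubmodule) ∧ W ≠ ⊤ ∧
      ∀ U : Submodule k V, (∀ i, U ∈ (S i).invtSubmodule) → W < U → U = ⊤ := by
  obtain ⟨W, hW⟩ := exists_maximal_of_wellFoundedGT
    (fun W : Submodule k V => (∀ i, W ∈ (S i).invtSubmodule) ∧ W ≠ ⊤)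
    ⟨⊥, fun i => Module.End.invtSubmodule.bot_mem _, bot_ne_top⟩
  exact ⟨W, hW.prop.1, hW.prop.2, fun U hU hWU => by_contra fun h => hW.not_gt ⟨hU, h⟩ hWU⟩

/-- `OrderDual.toDual` makes the matrices block *lower* triangular. -/
theorem exists_basis_blockTriangular_irreducible [FiniteDimensional k V]
    (S : κ → Module.End k V) :
    ∃ (r : ℕ) (n : Fin r → ℕ) (B : Module.Basis (Σ j, Fin (n j)) k V), (∀ j, 0 < n j) ∧
      (∀ i, (LinearMap.toMatrix B B (S i)).BlockTriangular fun x => OrderDual.toDual x.1) ∧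
      ∀ j, ActsIrreducibly fun i =>
        Matrix.toLinAlgEquiv' ((LinearMap.toMatrix B B (S i)).blockDiag' j) := by
  induction hd : Module.finrank k V using Nat.strong_induction_on generalizing V with | _ d ih => ?_
  rcases subsingleton_or_nontrivial V with _ | _
  · exact ⟨0, Fin.elim0, .empty V, fun j => j.elim0, fun i x => x.1.elim0, fun j => j.elim0⟩
  obtain ⟨W, hW, hWtop, hmax⟩ := exists_maximal_invariant_submodule S
  obtain ⟨r, n, bW, hn, htri, hirr⟩ :=
    ih _ (hd ▸ Submodule.finrank_lt hWtop) (fun i => (S i).restrict (hW i)) rfl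
  let n' : Fin (r + 1) → ℕ := Fin.cons (Module.finrank k (V ⧸ W)) n
  let bQ : Module.Basis (Fin (n' 0)) k (V ⧸ W) := Module.finBasis k (V ⧸ W)
  exact ⟨r + 1, n', basisSigmaOfQuotient (α := fun j => Fin (n' j)) bW bQ,
    Fin.cases (Module.finrank_pos_iff.2 (Submodule.Quotient.nontrivial_iff.2 hWtop)) hn,
    fun i => blockTriangular_toMatrix_basisSigmaOfQuotient (α := fun j => Fin (n' j)) bW bQ (hW i)
      (htri i),
    actsIrreducibly_blockDiag'_toMatrix_basisSigmaOfQuotient (α := fun j => Fin (n' j)) bW bQ hW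
      (.mapQ_of_maximal hW hmax) hirr⟩

end BlockTriangularization

theorem exists_isUnit_inv_mul_mul_submatrix_eq_toMatrix {k ι n : Type*} [Field k] [Fintype ι]
    [DecidableEq ι] [Fintype n] [DecidableEq n] (b : Module.Basis ι k (n → k)) (e : ι ≃ n) :
    ∃ P : Matrix n n k, IsUnit P ∧ ∀ A : Matrix n n k,
      (P⁻¹ * A * P).submatrix e e = LinearMap.toMatrix b b (Matrix.toLinAlgEquiv' A) := by
  let c := b.reindex e
  let P := (Pi.basisFun k n).toMatrix c
  have hP : c.toMatrix (Pi.basisFun k n) * P = 1 := c.toMatrix_mul_toMatrix_flip _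
  refine ⟨P, IsUnit.of_mul_eq_one_right _ hP, fun A => ?_⟩
  have hA : P⁻¹ * A * P = LinearMap.toMatrix c c (Matrix.toLinAlgEquiv' A) := by
    rw [Matrix.inv_eq_left_inv hP,
      ← basis_toMatrix_mul_linearMap_toMatrix_mul_basis_toMatrix c (Pi.basisFun k n)
        c (Pi.basisFun k n), LinearMap.toMatrix_eq_toMatrix']
    exact congrArg (_ * · * P) (LinearMap.toMatrix'_toLin' A).symm
  ext i j
  simp [hA, c, LinearMap.toMatrix_apply]

theorem exists_sigma_fin_equiv_fin_strictMono {r d : ℕ} {n : Fin r → ℕ} (h : ∑ j, n j = d) :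
    ∃ e : (Σ j, Fin (n j)) ≃ Fin d, (∀ j, StrictMono fun a => e ⟨j, a⟩) ∧
      ∀ i j, i < j → ∀ a b, e ⟨i, a⟩ < e ⟨j, b⟩ := by
  let e : (Σₗ j, Fin (n j)) ≃o Fin d :=
    (Fintype.orderIsoFinOfCardEq _ <| by simpa using h).symm
  exact ⟨toLex.trans e.toEquiv,
    fun j a b hab => e.strictMono (Sigma.Lex.lt_def.2 (.inr ⟨rfl, hab⟩)),
    fun i j hij a b => e.strictMono (Sigma.Lex.lt_def.2 (.inl hij))⟩

/-! ### Block triangular matrices -/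

section BlockTriangular

variable {o : Type*} [Fintype o] [LinearOrder o] {α : o → Type*} [∀ j, Fintype (α j)]

theorem blockDiag'_mul_of_blockTriangular {R : Type*} [NonUnitalNonAssocSemiring R]
    {A B : Matrix (Σ j, α j) (Σ j, α j) R} (hA : A.BlockTriangular fun x => OrderDual.toDual x.1)
    (hB : B.BlockTriangular fun x => OrderDual.toDual x.1) (j : o) :
    (A * B).blockDiag' j = A.blockDiag' j * B.blockDiag' j := by
  ext a b
  simp only [Matrix.blockDiag'_apply, Matrix.mul_apply]
  rw [Fintype.sum_sigma, Finset.sum_eq_single_of_mem j (Finset.mem_univ j)]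
  refine fun i _ hij => Finset.sum_eq_zero fun c _ => ?_
  rcases lt_or_gt_of_ne hij with h | h
  · rw [hB (i := ⟨i, c⟩) (j := ⟨j, b⟩) h, mul_zero]
  · rw [hA (i := ⟨j, a⟩) (j := ⟨i, c⟩) h, zero_mul]

variable [∀ j, DecidableEq (α j)]

theorem blockTriangular_list_prod {R : Type*} [Semiring R]
    {l : List (Matrix (Σ j, α j) (Σ j, α j) R)}
    (hl : ∀ A ∈ l, A.BlockTriangular fun x => OrderDual.toDual x.1) :
    l.prod.BlockTriangular fun x => OrderDual.toDual x.1 :=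
  list_prod_mem (S := Matrix.blockTriangularSubsemiring R _) hl

theorem blockDiag'_list_prod_of_blockTriangular {R : Type*} [Semiring R]
    {l : List (Matrix (Σ j, α j) (Σ j, α j) R)}
    (hl : ∀ A ∈ l, A.BlockTriangular fun x => OrderDual.toDual x.1) (j : o) :
    l.prod.blockDiag' j = (l.map fun A => A.blockDiag' j).prod := by
  induction l with
  | nil => simp
  | cons A l ih =>
    rw [List.forall_mem_cons] at hl
    rw [List.prod_cons, blockDiag'_mul_of_blockTriangular hl.1 (blockTriangular_list_prod hl.2),
      ih hl.2, List.map_cons, List.prod_cons]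

theorem spectrum_blockDiag'_subset {R : Type*} [CommRing R] {A : Matrix (Σ j, α j) (Σ j, α j) R}
    (hA : A.BlockTriangular fun x => OrderDual.toDual x.1) (j : o) :
    spectrum R (A.blockDiag' j) ⊆ spectrum R A := by
  intro z
  contrapose!
  simp only [spectrum.notMem_iff, Matrix.algebraMap_eq_diagonal]
  intro hz
  have hblock : (Matrix.diagonal (algebraMap R (α j → R) z)) - A.blockDiag' j =
      (Matrix.diagonal (algebraMap R ((Σ j, α j) → R) z) - A).blockDiag' j := by
    rw [Matrix.blockDiag'_sub, Pi.sub_apply, Matrix.blockDiag'_diagonal]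
    rfl
  generalize hB : Matrix.diagonal (algebraMap R ((Σ j, α j) → R) z) - A = B at hz hblock
  have hBtri : B.BlockTriangular fun x => OrderDual.toDual x.1 :=
    hB ▸ (Matrix.blockTriangular_diagonal _).sub hA
  have := hz.invertible
  refine .of_mul_eq_one (B⁻¹.blockDiag' j) ?_
  rw [hblock, ← blockDiag'_mul_of_blockTriangular hBtri
    (Matrix.blockTriangular_inv_of_blockTriangular hBtri), Matrix.mul_inv_of_invertible,
    Matrix.blockDiag'_one, Pi.one_apply]

theorem genSpecRad_blockDiag'_le {d K r : ℕ} {n : Fin r → ℕ}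
    {S : Fin K → Matrix (Fin d) (Fin d) ℂ}
    (φ : Matrix (Fin d) (Fin d) ℂ ≃ₐ[ℂ] Matrix (Σ j, Fin (n j)) (Σ j, Fin (n j)) ℂ)
    (hS : ∀ k, (φ (S k)).BlockTriangular fun x => OrderDual.toDual x.1) (j : Fin r) :
    genSpecRad (fun k => (φ (S k)).blockDiag' j) ≤ genSpecRad S := by
  refine genSpecRad_mono fun l => ?_
  have hl : ∀ A ∈ l.map fun k => φ (S k), A.BlockTriangular fun x => OrderDual.toDual x.1 := by
    simp [hS]
  have hspec := spectrum_blockDiag'_subset (blockTriangular_list_prod hl) j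
  rw [blockDiag'_list_prod_of_blockTriangular hl, List.map_map] at hspec
  rwa [← AlgEquiv.spectrum_eq φ, map_list_prod, List.map_map]

theorem norm_blockDiagonal'_le {M : ∀ j, Matrix (α j) (α j) ℂ} {c : ℝ} (hc : 0 ≤ c)
    (hM : ∀ j, ‖M j‖ ≤ c) : ‖Matrix.blockDiagonal' M‖ ≤ c := by
  lift c to NNReal using hc
  rw [← coe_nnnorm, NNReal.coe_le_coe, Matrix.linfty_opNNNorm_def, Finset.sup_le_iff]
  rintro ⟨j, a⟩ -
  rw [Fintype.sum_sigma, Finset.sum_eq_single_of_mem j (Finset.mem_univ j) fun i _ hij =>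
    Finset.sum_eq_zero fun b _ => by
      rw [Matrix.blockDiagonal'_apply_ne M _ _ hij.symm, nnnorm_zero]]
  simp only [Matrix.blockDiagonal'_apply_eq]
  calc ∑ b, ‖M j a b‖₊ ≤ ‖M j‖₊ := by
        rw [Matrix.linfty_opNNNorm_def]
        exact Finset.le_sup (f := fun a => ∑ b, ‖M j a b‖₊) (Finset.mem_univ a)
    _ ≤ c := hM j

end BlockTriangular

section ScaleSubdiagonal

variable {r : ℕ} {α : Fin r → Type*}

/-- The conjugate `D A D⁻¹` of a lower block triangular matrix `A`, where `D` is the diagonal matrix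
acting on block `j` as multiplication by `δ ^ j`, written so that it also makes sense at `δ = 0`.
The truncated subtraction is harmless since `A` vanishes above the diagonal. -/
def scaleSubdiagonal (A : Matrix (Σ j, α j) (Σ j, α j) ℂ) (δ : ℂ) :
    Matrix (Σ j, α j) (Σ j, α j) ℂ :=
  Matrix.of fun x y => δ ^ (x.1 - y.1 : ℕ) * A x y

variable {A : Matrix (Σ j, α j) (Σ j, α j) ℂ}

theorem continuous_scaleSubdiagonal : Continuous (scaleSubdiagonal A) :=
  continuous_matrix fun x y => by simp only [scaleSubdiagonal, Matrix.of_apply]; fun_prop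

theorem scaleSubdiagonal_zero (hA : A.BlockTriangular fun x => OrderDual.toDual x.1) :
    scaleSubdiagonal A 0 = Matrix.blockDiagonal' A.blockDiag' := by
  ext ⟨i, a⟩ ⟨j, b⟩
  rcases lt_trichotomy i j with h | rfl | h
  · have : A ⟨i, a⟩ ⟨j, b⟩ = 0 := hA h
    simp [scaleSubdiagonal, Matrix.blockDiagonal'_apply_ne _ _ _ h.ne, this]
  · simp [scaleSubdiagonal, Matrix.blockDiag'_apply]
  · have : (i - j : ℕ) ≠ 0 := by omega
    simp [scaleSubdiagonal, Matrix.blockDiagonal'_apply_ne _ _ _ h.ne', this]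

variable [∀ j, Fintype (α j)] [∀ j, DecidableEq (α j)]

theorem diagonal_mul_mul_diagonal_eq_scaleSubdiagonal
    (hA : A.BlockTriangular fun x => OrderDual.toDual x.1) {δ : ℂ} (hδ : δ ≠ 0) :
    Matrix.diagonal (fun x => δ ^ (x.1 : ℕ)) * A * Matrix.diagonal (fun x => (δ ^ (x.1 : ℕ))⁻¹) =
      scaleSubdiagonal A δ := by
  ext x y
  rw [Matrix.mul_diagonal, Matrix.diagonal_mul]
  rcases lt_or_ge x.1 y.1 with h | h
  · simp [scaleSubdiagonal, hA h]
  · rw [scaleSubdiagonal, Matrix.of_apply, pow_sub₀ _ hδ h, mul_right_comm]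

/-- Conjugating block `j` by `δ ^ j` with `δ` small makes the part below the diagonal negligible. -/
theorem exists_unit_norm_conj_sub_blockDiagonal'_le {κ : Type*} [Finite κ]
    {T : κ → Matrix (Σ j, α j) (Σ j, α j) ℂ}
    (hT : ∀ k, (T k).BlockTriangular fun x => OrderDual.toDual x.1) {ε : ℝ} (hε : 0 < ε) :
    ∃ Q : (Matrix (Σ j, α j) (Σ j, α j) ℂ)ˣ, ∀ k,
      ‖Q.val * T k * Q⁻¹.val - Matrix.blockDiagonal' (T k).blockDiag'‖ ≤ ε := by
  have hsmall : ∀ᶠ δ in 𝓝[≠] 0, ∀ k,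
      ‖scaleSubdiagonal (T k) δ - Matrix.blockDiagonal' (T k).blockDiag'‖ < ε := by
    refine eventually_all.2 fun k => eventually_nhdsWithin_of_eventually_nhds ?_
    have hcont : Continuous fun δ => ‖scaleSubdiagonal (T k) δ - scaleSubdiagonal (T k) 0‖ :=
      (continuous_scaleSubdiagonal.sub continuous_const).norm
    simpa [scaleSubdiagonal_zero (hT k)] using
      hcont.tendsto 0 |>.eventually_lt_const (u := ε) (by simpa using hε)
  obtain ⟨δ, hδ, hδ0⟩ := (hsmall.and eventually_mem_nhdsWithin).exists
  have hpow (x : Σ j, α j) : δ ^ (x.1 : ℕ) ≠ 0 := pow_ne_zero _ hδ0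
  let Q : (Matrix (Σ j, α j) (Σ j, α j) ℂ)ˣ :=
    ⟨Matrix.diagonal fun x => δ ^ (x.1 : ℕ), Matrix.diagonal fun x => (δ ^ (x.1 : ℕ))⁻¹,
      by simp [Matrix.diagonal_mul_diagonal, hpow], by simp [Matrix.diagonal_mul_diagonal, hpow]⟩
  refine ⟨Q, fun k => (hδ k).le.trans_eq' ?_⟩
  rw [← diagonal_mul_mul_diagonal_eq_scaleSubdiagonal (hT k) hδ0]
  rfl

end ScaleSubdiagonal

/-! ### Cocycle products -/

section Cocycle

variable {Ω R : Type*} {θ : Ω → Ω}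

/-- The ordered product `A x * A (θ x) * ⋯ * A (θ^[n - 1] x)`, that is, the cocycle generated by `A`
over `θ`. It is the noncommutative multiplicative analogue of `birkhoffSum`. -/
def cocycleProd [Monoid R] (θ : Ω → Ω) (A : Ω → R) (n : ℕ) (x : Ω) : R :=
  ((List.range n).map fun i => A (θ^[i] x)).prod

section Monoid

variable [Monoid R] (A : Ω → R) (x : Ω)

@[simp]
theorem cocycleProd_zero : cocycleProd θ A 0 x = 1 := rfl

theorem cocycleProd_succ (n : ℕ) :
    cocycleProd θ A (n + 1) x = A x * cocycleProd θ A n (θ x) := by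
  simp [cocycleProd, List.range_succ_eq_map, Function.comp_def]

@[simp]
theorem cocycleProd_one : cocycleProd θ A 1 x = A x := by
  simp [cocycleProd_succ]

theorem cocycleProd_add (m n : ℕ) :
    cocycleProd θ A (m + n) x = cocycleProd θ A m x * cocycleProd θ A n (θ^[m] x) := by
  induction m generalizing x with
  | zero => simp
  | succ m ih =>
    rw [add_right_comm, cocycleProd_succ, ih, cocycleProd_succ, mul_assoc,
      Function.iterate_succ_apply]

theorem map_cocycleProd {R' F : Type*} [Monoid R'] [FunLike F R R'] [MonoidHomClass F R R'] (φ : F)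
    (n : ℕ) : φ (cocycleProd θ A n x) = cocycleProd θ (fun x => φ (A x)) n x := by
  simp [cocycleProd, map_list_prod, Function.comp_def]

theorem cocycleProd_units_conj (Q : Rˣ) (n : ℕ) :
    cocycleProd θ (fun x => Q.val * A x * Q⁻¹.val) n x =
      Q.val * cocycleProd θ A n x * Q⁻¹.val := by
  induction n generalizing x with
  | zero => simp
  | succ n ih =>
    rw [cocycleProd_succ, cocycleProd_succ, ih]
    simp [mul_assoc]

theorem cocycleProd_const_smul {k : Type*} [CommMonoid k] [MulAction k R] [IsScalarTower k R R]
    [SMulCommClass k R R] (c : k) (n : ℕ) :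
    cocycleProd θ (fun x => c • A x) n x = c ^ n • cocycleProd θ A n x := by
  induction n generalizing x with
  | zero => simp
  | succ n ih => simp only [cocycleProd_succ, ih, smul_mul_smul_comm, pow_succ']

end Monoid

variable {w : Ω → ℝ}

theorem one_le_cocycleProd (hw : ∀ x, 1 ≤ w x) (n : ℕ) (x : Ω) : 1 ≤ cocycleProd θ w n x := by
  induction n generalizing x with
  | zero => simp
  | succ n ih => exact cocycleProd_succ w x n ▸ one_le_mul_of_one_le_of_one_le (hw x) (ih _)

theorem cocycleProd_mul_cocycleProd_le (hw : ∀ x, 1 ≤ w x) (m n : ℕ) (x : Ω) :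
    cocycleProd θ w m x * cocycleProd θ w n (θ (θ^[m] x)) ≤ cocycleProd θ w (m + (n + 1)) x := by
  have hw0 (n : ℕ) (x : Ω) : 0 ≤ cocycleProd θ w n x :=
    zero_le_one.trans (one_le_cocycleProd hw n x)
  rw [cocycleProd_add, cocycleProd_succ]
  exact mul_le_mul_of_nonneg_left (le_mul_of_one_le_left (hw0 _ _) (hw _)) (hw0 _ _)

theorem birkhoffSum_ofReal_log (hw : ∀ x, 1 ≤ w x) (n : ℕ) (x : Ω) :
    birkhoffSum θ (fun x => ENNReal.ofReal (Real.log (w x))) n x =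
      ENNReal.ofReal (Real.log (cocycleProd θ w n x)) := by
  induction n generalizing x with
  | zero => simp
  | succ n ih =>
    have hpos (n : ℕ) (x : Ω) : 0 < cocycleProd θ w n x :=
      zero_lt_one.trans_le (one_le_cocycleProd hw n x)
    rw [birkhoffSum_succ', ih, cocycleProd_succ,
      Real.log_mul (zero_lt_one.trans_le (hw x)).ne' (hpos n _).ne',
      ENNReal.ofReal_add (Real.log_nonneg (hw x)) (Real.log_nonneg (one_le_cocycleProd hw n _))]

variable [SeminormedRing R]

theorem norm_cocycleProd_le_pow {A : Ω → R} {C : ℝ} (hA : ∀ x, ‖A x‖ ≤ C) (n : ℕ) (x : Ω) :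
    ‖cocycleProd θ A n x‖ ≤ ‖(1 : R)‖ * C ^ n := by
  induction n generalizing x with
  | zero => simp
  | succ n ih =>
    rw [cocycleProd_succ, pow_succ', mul_left_comm]
    exact norm_mul_le_of_le (hA x) (ih _)

/-- Cut the orbit greedily into stretches along which `A` is controlled by `w`; only the last,
incomplete stretch, of length less than `M`, costs a constant. -/
theorem norm_cocycleProd_le_of_exists_le {A : Ω → R} {C : ℝ} {M : ℕ} (hC : 1 ≤ C)
    (hA : ∀ x, ‖A x‖ ≤ C) (hw : ∀ x, 1 ≤ w x)
    (h : ∀ x, ∃ m, 1 ≤ m ∧ m ≤ M ∧ ‖cocycleProd θ A m x‖ ≤ cocycleProd θ w m x) (n : ℕ) (x : Ω) :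
    ‖cocycleProd θ A n x‖ ≤ ‖(1 : R)‖ * C ^ M * cocycleProd θ w n x := by
  induction n using Nat.strong_induction_on generalizing x with
  | _ n ih =>
    obtain ⟨m, hm1, hmM, hm⟩ := h x
    rcases le_or_gt m n with hmn | hnm
    · obtain ⟨n, rfl⟩ := Nat.exists_eq_add_of_le hmn
      rw [cocycleProd_add, cocycleProd_add, mul_left_comm]
      exact norm_mul_le_of_le hm (ih n (by omega) _)
    · calc ‖cocycleProd θ A n x‖ ≤ ‖(1 : R)‖ * C ^ n := norm_cocycleProd_le_pow hA n x
        _ ≤ ‖(1 : R)‖ * C ^ M := by gcongr; omega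
        _ ≤ ‖(1 : R)‖ * C ^ M * cocycleProd θ w n x :=
            le_mul_of_one_le_right (by positivity) (one_le_cocycleProd hw n x)

/-- Replacing the factors `D` by `A` one at a time multiplies the bound by `1 + e * L` each time. -/
theorem norm_cocycleProd_le_of_norm_sub_le {A D : Ω → R} {L e : ℝ} (hw : ∀ x, 1 ≤ w x)
    (hD : ∀ n x, ‖cocycleProd θ D n x‖ ≤ L * cocycleProd θ w n x)
    (hAD : ∀ x, ‖A x - D x‖ ≤ e) (n : ℕ) (x : Ω) :
    ‖cocycleProd θ A n x‖ ≤ L * (1 + e * L) ^ n * cocycleProd θ w n x := by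
  suffices h : ∀ m x, ‖cocycleProd θ D m x * cocycleProd θ A n (θ^[m] x)‖ ≤
      L * (1 + e * L) ^ n * cocycleProd θ w (m + n) x by simpa using h 0 x
  induction n with
  | zero => simpa using hD
  | succ n ih =>
    intro m x
    let y := θ^[m] x
    have hsplit : cocycleProd θ D m x * cocycleProd θ A (n + 1) y =
        cocycleProd θ D (m + 1) x * cocycleProd θ A n (θ y) +
          cocycleProd θ D m x * (A y - D y) * cocycleProd θ A n (θ y) := by
      rw [cocycleProd_succ, cocycleProd_add, cocycleProd_one]
      noncomm_ring
    have hmain : ‖cocycleProd θ D (m + 1) x * cocycleProd θ A n (θ y)‖ ≤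
        L * (1 + e * L) ^ n * cocycleProd θ w (m + (n + 1)) x := by
      simpa only [Function.iterate_succ_apply', add_assoc, add_comm 1] using ih (m + 1) x
    have herror : ‖cocycleProd θ D m x * (A y - D y) * cocycleProd θ A n (θ y)‖ ≤
        L * cocycleProd θ w m x * e * (L * (1 + e * L) ^ n * cocycleProd θ w n (θ y)) :=
      norm_mul_le_of_le (norm_mul_le_of_le (hD m x) (hAD y)) (by simpa using ih 0 (θ y))
    have hL : 0 ≤ L := by simpa using (norm_nonneg _).trans (hD 0 x)
    have he : 0 ≤ e := (norm_nonneg _).trans (hAD x)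
    calc ‖cocycleProd θ D m x * cocycleProd θ A (n + 1) y‖
        ≤ L * (1 + e * L) ^ n * cocycleProd θ w (m + (n + 1)) x + L * (1 + e * L) ^ n * (e * L) *
            (cocycleProd θ w m x * cocycleProd θ w n (θ y)) := by
          rw [hsplit]
          exact norm_add_le_of_le hmain (herror.trans_eq (by ring))
      _ ≤ L * (1 + e * L) ^ n * cocycleProd θ w (m + (n + 1)) x +
            L * (1 + e * L) ^ n * (e * L) * cocycleProd θ w (m + (n + 1)) x := by
          gcongr
          exact cocycleProd_mul_cocycleProd_le hw m n x
      _ = L * (1 + e * L) ^ (n + 1) * cocycleProd θ w (m + (n + 1)) x := by ring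

end Cocycle

/-! ### Growth of cocycles over an ergodic transformation -/

section Ergodic

open Asymptotics

variable {Ω R : Type*} [MeasurableSpace Ω] {μ : Measure Ω} {θ : Ω → Ω}

theorem stronglyMeasurable_cocycleProd [Monoid R] [TopologicalSpace R] [ContinuousMul R]
    (hθ : Measurable θ) {A : Ω → R} (hA : StronglyMeasurable A) (n : ℕ) :
    StronglyMeasurable (cocycleProd θ A n) := by
  induction n with
  | zero => exact stronglyMeasurable_const
  | succ n ih =>
    rw [show cocycleProd θ A (n + 1) = fun x => A x * cocycleProd θ A n (θ x) from
      funext fun x => cocycleProd_succ A x n]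
    exact hA.mul (ih.comp_measurable hθ)

theorem exists_measurableSet_forall_exists_le [IsFiniteMeasure μ] {ι : Type*} [Finite ι]
    {p : ι → ℕ → Ω → Prop} (hp : ∀ j m, MeasurableSet {x | p j m x})
    (h : ∀ j, ∀ᵐ x ∂μ, ∃ m, p j m x) {ε : ℝ≥0∞} (hε : 0 < ε) :
    ∃ G M, MeasurableSet G ∧ μ Gᶜ < ε ∧ ∀ x ∈ G, ∀ j, ∃ m ≤ M, p j m x := by
  let G (M : ℕ) : Set Ω := {x | ∀ j, ∃ m ≤ M, p j m x}
  have hGmono : Monotone G := fun _ _ hMM' _ hx j => (hx j).imp fun _ hm => ⟨hm.1.trans hMM', hm.2⟩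
  have hGmeas (M : ℕ) : MeasurableSet (G M) := by
    simp only [G]
    measurability
  have hGae : ∀ᵐ x ∂μ, ∃ M, x ∈ G M := by
    filter_upwards [eventually_countable_forall.2 h] with x hx
    choose m hm using hx
    obtain ⟨M, hM⟩ := (Set.finite_range m).bddAbove
    exact ⟨M, fun j => ⟨m j, hM ⟨j, rfl⟩, hm j⟩⟩
  have hlim := tendsto_measure_iInter_atTop (μ := μ) (s := fun M => (G M)ᶜ)
    (fun M => (hGmeas M).compl.nullMeasurableSet)
    (fun _ _ hMM' => Set.compl_subset_compl.2 (hGmono hMM')) ⟨0, measure_ne_top μ _⟩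
  have hnull : μ (⋂ M, (G M)ᶜ) = 0 := by
    simpa only [ae_iff, not_exists, Set.ofPred_forall, Set.compl_def] using hGae
  obtain ⟨M, hM⟩ := (hlim.eventually_lt_const (hnull ▸ hε)).exists
  exact ⟨G M, M, hGmeas M, hM, fun x hx => hx⟩

theorem lintegral_birkhoffSum (hθ : MeasurePreserving θ μ μ) {g : Ω → ℝ≥0∞} (hg : Measurable g)
    (n : ℕ) : ∫⁻ x, birkhoffSum θ g n x ∂μ = n * ∫⁻ x, g x ∂μ := by
  simp_rw [birkhoffSum]
  rw [lintegral_finsetSum _ fun i _ => by exact hg.comp (hθ.measurable.iterate i)]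
  simp [fun i => (hθ.iterate i).lintegral_comp hg]

/-- Fatou's lemma suffices here, in place of the pointwise ergodic theorem. -/
theorem frequently_birkhoffSum_lt [IsProbabilityMeasure μ] (hθ : MeasurePreserving θ μ μ)
    {g : Ω → ℝ≥0∞} (hg : Measurable g) {c : ℝ≥0∞} (hc : ∫⁻ x, g x ∂μ < c) :
    ∃ᶠ x in ae μ, ∃ᶠ n : ℕ in atTop, birkhoffSum θ g n x < c * n := by
  have hmeas (n : ℕ) : Measurable (birkhoffSum θ g n) :=
    Finset.measurable_fun_sum _ fun i _ => hg.comp (hθ.measurable.iterate i)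
  by_contra hcon
  simp only [not_frequently, not_lt] at hcon
  refine hc.not_ge ?_
  calc c = ∫⁻ _, c ∂μ := by simp
    _ ≤ ∫⁻ x, liminf (fun n : ℕ => birkhoffSum θ g n x / n) atTop ∂μ := by
        refine lintegral_mono_ae (hcon.mono fun x hx => le_liminf_of_le ?_ ?_)
        · isBoundedDefault
        · filter_upwards [hx, eventually_gt_atTop 0] with n hn hn0
          exact (ENNReal.le_div_iff_mul_le (by simp [hn0.ne']) (by simp)).2 hn
    _ ≤ liminf (fun n : ℕ => ∫⁻ x, birkhoffSum θ g n x / n ∂μ) atTop :=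
        lintegral_liminf_le fun n => (hmeas n).div_const _
    _ = ∫⁻ x, g x ∂μ := by
        refine Tendsto.liminf_eq (tendsto_const_nhds.congr' ?_)
        filter_upwards [eventually_gt_atTop 0] with n hn0
        simp_rw [div_eq_mul_inv]
        rw [lintegral_mul_const _ (hmeas n), lintegral_birkhoffSum hθ hg, mul_comm, ← mul_assoc,
          ENNReal.inv_mul_cancel (by simp [hn0.ne']) (by simp), one_mul]

theorem frequently_cocycleProd_lt_pow [IsProbabilityMeasure μ] (hθ : MeasurePreserving θ μ μ)
    {w : Ω → ℝ} (hwm : Measurable w) (hw : ∀ x, 1 ≤ w x) {s : ℝ} (hs : 0 < s)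
    (hws : ∫⁻ x, ENNReal.ofReal (Real.log (w x)) ∂μ < ENNReal.ofReal (Real.log s)) :
    ∃ᶠ x in ae μ, ∃ᶠ n : ℕ in atTop, cocycleProd θ w n x < s ^ n := by
  refine (frequently_birkhoffSum_lt hθ hwm.log.ennreal_ofReal hws).mono fun x hx =>
    hx.mono fun n hn => ?_
  rw [birkhoffSum_ofReal_log hw, ← ENNReal.ofReal_natCast,
    ← ENNReal.ofReal_mul' n.cast_nonneg, mul_comm, ← Real.log_pow] at hn
  exact (Real.log_lt_log_iff (zero_lt_one.trans_le (one_le_cocycleProd hw n x)) (pow_pos hs n)).1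
    (lt_of_not_ge fun h => hn.not_ge (ENNReal.ofReal_le_ofReal h))

/-- The weight equals `1` where some product of length at most `M` is contracting, and a uniform
bound of the generators elsewhere, which is rare if `M` is large. -/
theorem exists_cocycleProd_bound_of_ae_contracting [IsProbabilityMeasure μ]
    (hθ : MeasurePreserving θ μ μ) {ι : Type*} [Finite ι] {R : ι → Type*}
    [∀ j, SeminormedRing (R j)] {A : ∀ j, Ω → R j} (hA : ∀ j, StronglyMeasurable (A j))
    {C : ℝ} (hC : 1 ≤ C) (hAC : ∀ j x, ‖A j x‖ ≤ C)
    (h : ∀ j, ∀ᵐ x ∂μ, ∃ m, 1 ≤ m ∧ ‖cocycleProd θ (A j) m x‖ ≤ 1) {s : ℝ} (hs : 1 < s) :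
    ∃ w : Ω → ℝ, (∀ x, 1 ≤ w x) ∧
      (∃ L, 0 < L ∧ ∀ j n x, ‖cocycleProd θ (A j) n x‖ ≤ L * cocycleProd θ w n x) ∧
      ∃ᶠ x in ae μ, ∃ᶠ n : ℕ in atTop, cocycleProd θ w n x < s ^ n := by
  have hs' : 0 < ENNReal.ofReal (Real.log s) := ENNReal.ofReal_pos.2 (Real.log_pos hs)
  obtain ⟨G, M, hG, hμG, hGM⟩ := exists_measurableSet_forall_exists_le
    (fun j m => (MeasurableSet.const (1 ≤ m)).inter
      ((stronglyMeasurable_cocycleProd hθ.measurable (hA j) m).norm.measurable measurableSet_Iic)) h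
    (ENNReal.div_pos hs'.ne' (ENNReal.ofReal_ne_top (r := Real.log C)))
  let w : Ω → ℝ := Gᶜ.mulIndicator fun _ => C
  have hw : ∀ x, 1 ≤ w x := Set.one_le_mulIndicator fun _ _ => hC
  obtain ⟨L, hL, hL'⟩ := exists_one_le_forall_norm_le fun j => ‖(1 : R j)‖ * C ^ (M + 1)
  refine ⟨w, hw, ⟨L, zero_lt_one.trans_le hL, fun j n x => ?_⟩, ?_⟩
  · refine (norm_cocycleProd_le_of_exists_le hC (hAC j) hw (fun x => ?_) n x).trans
      (mul_le_mul_of_nonneg_right ((Real.le_norm_self _).trans (hL' j))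
        (zero_le_one.trans (one_le_cocycleProd hw n x)))
    by_cases hx : x ∈ G
    · obtain ⟨m, hmM, hm1, hm⟩ := hGM x hx j
      exact ⟨m, hm1, by omega, hm.trans (one_le_cocycleProd hw m x)⟩
    · exact ⟨1, le_rfl, by omega, by simpa [w, hx] using hAC j x⟩
  · have hwmeas : Measurable w := by
      classical
      rw [show w = Gᶜ.mulIndicator fun _ => C from rfl, ← Set.piecewise_eq_mulIndicator]
      exact measurable_const.piecewise hG.compl measurable_const
    refine frequently_cocycleProd_lt_pow hθ hwmeas hw (zero_lt_one.trans hs) ?_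
    have hlog : (fun x => ENNReal.ofReal (Real.log (w x))) =
        Gᶜ.indicator fun _ => ENNReal.ofReal (Real.log C) := by
      ext x
      by_cases hx : x ∈ G <;> simp [w, hx]
    rw [hlog, lintegral_indicator_const hG.compl]
    exact ENNReal.mul_lt_of_lt_div' hμG

/-- The sequence `y` is bounded below, up to constants, by `t ^ n` for each `t < ρ`. -/
def GrowsAtRate {E : Type*} [Norm E] (ρ : ℝ) (y : ℕ → E) : Prop :=
  ∀ t, 0 < t → t < ρ → (fun n : ℕ => t ^ n) =O[atTop] y

theorem GrowsAtRate.of_isBigO {E F : Type*} [SeminormedAddCommGroup E] [SeminormedAddCommGroup F]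
    {ρ : ℝ} {y : ℕ → E} {z : ℕ → F} (hy : GrowsAtRate ρ y) (hyz : y =O[atTop] z) :
    GrowsAtRate ρ z :=
  fun t ht htρ => (hy t ht htρ).trans hyz

theorem GrowsAtRate.eventually_lt_norm {E : Type*} [SeminormedAddCommGroup E] {ρ : ℝ} {y : ℕ → E}
    (hy : GrowsAtRate ρ y) {s : ℝ} (hs : 0 < s) (hsρ : s < ρ) (L : ℝ) :
    ∀ᶠ n in atTop, L * s ^ n < ‖y n‖ := by
  obtain ⟨t, hst, htρ⟩ := exists_between hsρ
  have hlittle : (fun n : ℕ => (|L| + 1) * s ^ n) =o[atTop] y :=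
    ((isLittleO_pow_pow_of_lt_left hs.le hst).const_mul_left _).trans_isBigO
      (hy t (hs.trans hst) htρ)
  filter_upwards [hlittle.def one_pos] with n hn
  calc L * s ^ n < (|L| + 1) * s ^ n := by
        have := le_abs_self L
        gcongr
        linarith
    _ ≤ ‖y n‖ := (Real.le_norm_self _).trans (by simpa only [one_mul] using hn)

variable [SeminormedRing R]

theorem measurableSet_isBigO_cocycleProd (hθ : Measurable θ) {A : Ω → R}
    (hA : StronglyMeasurable A) (y : ℕ → ℝ) :
    MeasurableSet {x | y =O[atTop] fun n => cocycleProd θ A n x} := by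
  have heq : {x | y =O[atTop] fun n => cocycleProd θ A n x} =
      {x | ∃ c : ℕ, ∃ N, ∀ n ≥ N, ‖y n‖ ≤ c * ‖cocycleProd θ A n x‖} := by
    ext x
    simp only [Set.mem_ofPred_eq, ← eventually_atTop]
    refine ⟨fun h => ?_, fun ⟨c, hc⟩ => .of_bound c hc⟩
    obtain ⟨c, hc⟩ := h.bound
    exact ⟨⌈c⌉₊, hc.mono fun n hn => hn.trans (by gcongr; exact Nat.le_ceil c)⟩
  have hmeas (c n : ℕ) : MeasurableSet {x | ‖y n‖ ≤ c * ‖cocycleProd θ A n x‖} :=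
    measurableSet_le measurable_const
      ((stronglyMeasurable_cocycleProd hθ hA n).norm.measurable.const_mul _)
  rw [heq]
  measurability

theorem ae_isBigO_cocycleProd_or [IsFiniteMeasure μ] (hθ : Ergodic θ μ) {A : Ω → R}
    (hA : StronglyMeasurable A) {t : ℝ} (ht : 0 < t) :
    (∀ᵐ x ∂μ, (fun n : ℕ => t ^ n) =O[atTop] fun n => cocycleProd θ A n x) ∨
      ∀ᵐ x ∂μ, ¬ (fun n : ℕ => t ^ n) =O[atTop] fun n => cocycleProd θ A n x := by
  have hinv : {x | (fun n : ℕ => t ^ n) =O[atTop] fun n => cocycleProd θ A n x} ⊆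
      θ ⁻¹' {x | (fun n : ℕ => t ^ n) =O[atTop] fun n => cocycleProd θ A n x} := by
    intro x hx
    calc (fun n : ℕ => t ^ n) =O[atTop] fun n : ℕ => t ^ (n + 1) := by
          simp_rw [pow_succ']
          exact isBigO_self_const_mul ht.ne' _ _
      _ =O[atTop] fun n => cocycleProd θ A (n + 1) x := hx.comp_tendsto (tendsto_add_atTop_nat 1)
      _ =O[atTop] fun n => cocycleProd θ A n (θ x) :=
        .of_bound ‖A x‖ (.of_forall fun n => cocycleProd_succ A x n ▸ norm_mul_le _ _)
  refine (hθ.ae_empty_or_univ_of_ae_le_preimage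
    (measurableSet_isBigO_cocycleProd hθ.measurable hA _).nullMeasurableSet
    hinv.eventuallyLE).symm.imp eventuallyEq_univ.1 fun h => ?_
  exact ae_iff.2 (by simpa using ae_eq_empty.1 h)

theorem ae_growsAtRate_or_exists_ae_norm_le_pow [IsFiniteMeasure μ] (hθ : Ergodic θ μ) {A : Ω → R}
    (hA : StronglyMeasurable A) (ρ : ℝ) :
    (∀ᵐ x ∂μ, GrowsAtRate ρ fun n => cocycleProd θ A n x) ∨
      ∃ t, 0 < t ∧ t < ρ ∧ ∀ᵐ x ∂μ, ∃ m, 1 ≤ m ∧ ‖cocycleProd θ A m x‖ ≤ t ^ m := by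
  by_cases h : ∀ t, 0 < t → t < ρ →
      ∀ᵐ x ∂μ, (fun n : ℕ => t ^ n) =O[atTop] fun n => cocycleProd θ A n x
  · left
    have hrat : ∀ᵐ x ∂μ, ∀ q : ℚ, 0 < (q : ℝ) → q < ρ →
        (fun n : ℕ => (q : ℝ) ^ n) =O[atTop] fun n => cocycleProd θ A n x := by
      simpa only [ae_all_iff, eventually_imp_distrib_left] using fun q : ℚ => h q
    filter_upwards [hrat] with x hx t ht htρ
    obtain ⟨q, htq, hqρ⟩ := exists_rat_btwn htρ
    exact (isLittleO_pow_pow_of_lt_left ht.le htq).isBigO.trans (hx q (ht.trans htq) hqρ)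
  · simp only [not_forall] at h
    obtain ⟨t, ht, htρ, hnot⟩ := h
    refine .inr ⟨t, ht, htρ, ?_⟩
    filter_upwards [(ae_isBigO_cocycleProd_or hθ hA ht).resolve_left hnot] with x hx
    by_contra! hlt
    refine hx (.of_bound 1 ?_)
    filter_upwards [eventually_ge_atTop 1] with m hm
    simpa [abs_of_pos ht] using (hlt m hm).le

end Ergodic

/-! ### Cocycles of block triangular matrices -/

section BlockTriangularCocycle

variable {Ω : Type*} {r : ℕ} {α : Fin r → Type*} {A : Ω → Matrix (Σ j, α j) (Σ j, α j) ℂ}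

theorem stronglyMeasurable_blockDiag' [MeasurableSpace Ω] (hA : StronglyMeasurable A) (j : Fin r) :
    StronglyMeasurable fun x => (A x).blockDiag' j :=
  ((continuous_apply j).comp
    (Continuous.matrix_blockDiag' continuous_id)).comp_stronglyMeasurable hA

variable {θ : Ω → Ω} [∀ j, Fintype (α j)] [∀ j, DecidableEq (α j)]

theorem norm_cocycleProd_blockDiagonal'_le {D : ∀ j, Ω → Matrix (α j) (α j) ℂ} {n : ℕ} {x : Ω}
    {c : ℝ} (hc : 0 ≤ c) (hD : ∀ j, ‖cocycleProd θ (D j) n x‖ ≤ c) :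
    ‖cocycleProd θ (fun x => Matrix.blockDiagonal' fun j => D j x) n x‖ ≤ c := by
  let E (x : Ω) (j : Fin r) : Matrix (α j) (α j) ℂ := D j x
  have heq : cocycleProd θ (fun x => Matrix.blockDiagonal' (E x)) n x =
      Matrix.blockDiagonal' (cocycleProd θ E n x) :=
    (map_cocycleProd E x (Matrix.blockDiagonal'RingHom α ℂ) n).symm
  exact heq ▸ norm_blockDiagonal'_le hc fun j =>
    (map_cocycleProd E x (Pi.evalMonoidHom _ j) n ▸ hD j :)

theorem exists_norm_cocycleProd_le_of_blockTriangular (hfin : (Set.range A).Finite)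
    (hA : ∀ x, (A x).BlockTriangular fun p => OrderDual.toDual p.1) {w : Ω → ℝ}
    (hw : ∀ x, 1 ≤ w x) {L : ℝ} (hL : 0 < L)
    (hblock : ∀ j n x, ‖cocycleProd θ (fun x => (A x).blockDiag' j) n x‖ ≤ L * cocycleProd θ w n x)
    {s : ℝ} (hs : 1 < s) :
    ∃ L', 0 < L' ∧ ∀ n x, ‖cocycleProd θ A n x‖ ≤ L' * s ^ n * cocycleProd θ w n x := by
  have : Finite (Set.range A) := hfin
  have hw0 (n : ℕ) (x : Ω) : 0 ≤ cocycleProd θ w n x :=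
    zero_le_one.trans (one_le_cocycleProd hw n x)
  obtain ⟨Q, hQ⟩ := exists_unit_norm_conj_sub_blockDiagonal'_le
    (T := ((↑) : Set.range A → Matrix (Σ j, α j) (Σ j, α j) ℂ))
    (by rintro ⟨_, x, rfl⟩; exact hA x) (div_pos (sub_pos.2 hs) hL)
  have hdiag (n : ℕ) (x : Ω) :
      ‖cocycleProd θ (fun x => Matrix.blockDiagonal' (A x).blockDiag') n x‖ ≤
        L * cocycleProd θ w n x :=
    norm_cocycleProd_blockDiagonal'_le (mul_nonneg hL.le (hw0 n x)) fun j => hblock j n x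
  have hconj (n : ℕ) (x : Ω) : ‖Q.val * cocycleProd θ A n x * Q⁻¹.val‖ ≤
      L * s ^ n * cocycleProd θ w n x := by
    rw [← cocycleProd_units_conj]
    convert norm_cocycleProd_le_of_norm_sub_le hw hdiag (fun x => hQ ⟨A x, x, rfl⟩) n x using 4
    field_simp
    ring
  refine ⟨(‖Q⁻¹.val‖ * ‖Q.val‖ + 1) * L, by positivity, fun n x => ?_⟩
  calc ‖cocycleProd θ A n x‖ = ‖Q⁻¹.val * (Q.val * cocycleProd θ A n x * Q⁻¹.val) * Q.val‖ := by
        simp [mul_assoc]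
    _ ≤ ‖Q⁻¹.val‖ * (L * s ^ n * cocycleProd θ w n x) * ‖Q.val‖ :=
        norm_mul_le_of_le (norm_mul_le_of_le le_rfl (hconj n x)) le_rfl
    _ ≤ (‖Q⁻¹.val‖ * ‖Q.val‖ + 1) * L * s ^ n * cocycleProd θ w n x := by
        have := mul_nonneg (mul_nonneg hL.le (pow_nonneg (zero_le_one.trans hs.le) n)) (hw0 n x)
        linarith

variable [MeasurableSpace Ω] {μ : Measure Ω} [IsProbabilityMeasure μ]

theorem exists_frequently_norm_cocycleProd_le_of_blockTriangular (hθ : MeasurePreserving θ μ μ)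
    (hAm : StronglyMeasurable A) (hfin : (Set.range A).Finite)
    (hA : ∀ x, (A x).BlockTriangular fun p => OrderDual.toDual p.1)
    (h : ∀ j, ∀ᵐ x ∂μ, ∃ m, 1 ≤ m ∧ ‖cocycleProd θ (fun x => (A x).blockDiag' j) m x‖ ≤ 1)
    {s : ℝ} (hs : 1 < s) :
    ∃ L, ∃ᶠ x in ae μ, ∃ᶠ n in atTop, ‖cocycleProd θ A n x‖ ≤ L * s ^ n := by
  have : Finite (Set.range A) := hfin
  have hs' : 1 < √s := Real.lt_sqrt_of_sq_lt (by simpa using hs)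
  obtain ⟨C, hC, hAC⟩ := exists_one_le_forall_norm_le
    fun p : Fin r × Set.range A => ‖p.2.val.blockDiag' p.1‖
  obtain ⟨w, hw, ⟨L, hL, hAL⟩, hfreq⟩ := exists_cocycleProd_bound_of_ae_contracting hθ
    (stronglyMeasurable_blockDiag' hAm) hC
    (fun j x => (Real.le_norm_self _).trans (hAC (j, ⟨A x, x, rfl⟩))) h hs'
  obtain ⟨L', hL', hAL'⟩ := exists_norm_cocycleProd_le_of_blockTriangular hfin hA hw hL hAL hs'
  refine ⟨L', hfreq.mono fun x hx => hx.mono fun n hn => ?_⟩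
  calc ‖cocycleProd θ A n x‖ ≤ L' * √s ^ n * cocycleProd θ w n x := hAL' n x
    _ ≤ L' * √s ^ n * √s ^ n := by gcongr
    _ = L' * s ^ n := by
      rw [mul_assoc, ← mul_pow, Real.mul_self_sqrt (zero_le_one.trans hs.le)]

theorem exists_frequently_norm_cocycleProd_le_of_ae_norm_le_pow (hθ : MeasurePreserving θ μ μ)
    (hAm : StronglyMeasurable A) (hfin : (Set.range A).Finite)
    (hA : ∀ x, (A x).BlockTriangular fun p => OrderDual.toDual p.1) {t : ℝ} (ht : 0 < t)
    (h : ∀ j, ∀ᵐ x ∂μ, ∃ m, 1 ≤ m ∧ ‖cocycleProd θ (fun x => (A x).blockDiag' j) m x‖ ≤ t ^ m)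
    {s : ℝ} (hts : t < s) :
    ∃ L, ∃ᶠ x in ae μ, ∃ᶠ n in atTop, ‖cocycleProd θ A n x‖ ≤ L * s ^ n := by
  let c : ℂ := (t : ℂ)⁻¹
  have hc : ‖c‖ = t⁻¹ := by simp [c, abs_of_pos ht]
  have hscaled (j : Fin r) : ∀ᵐ x ∂μ, ∃ m, 1 ≤ m ∧
      ‖cocycleProd θ (fun x => c • (A x).blockDiag' j) m x‖ ≤ 1 := by
    filter_upwards [h j] with x ⟨m, hm1, hm⟩
    refine ⟨m, hm1, ?_⟩
    rwa [cocycleProd_const_smul, norm_smul, norm_pow, hc, inv_pow, inv_mul_le_iff₀ (pow_pos ht m),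
      mul_one]
  obtain ⟨L, hL⟩ := exists_frequently_norm_cocycleProd_le_of_blockTriangular hθ (hAm.const_smul c)
    ((hfin.image (c • ·)).subset (Set.range_comp (c • ·) A).le)
    (fun x p q hpq => by simp [hA x hpq]) hscaled ((one_lt_div ht).2 hts)
  refine ⟨L, hL.mono fun x hx => hx.mono fun n hn => ?_⟩
  rw [show c • A = fun x => c • A x from rfl, cocycleProd_const_smul, norm_smul, norm_pow, hc,
    div_pow, inv_pow, inv_mul_le_iff₀ (pow_pos ht n)] at hn
  exact hn.trans_eq (by field_simp)

theorem exists_block_ae_growsAtRate [Nonempty (Fin r)] (hθ : Ergodic θ μ)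
    (hAm : StronglyMeasurable A) (hfin : (Set.range A).Finite)
    (hA : ∀ x, (A x).BlockTriangular fun p => OrderDual.toDual p.1) {ρ : ℝ}
    (hgrow : ∀ᵐ x ∂μ, GrowsAtRate ρ fun n => cocycleProd θ A n x) :
    ∃ j, ∀ᵐ x ∂μ, GrowsAtRate ρ fun n => cocycleProd θ (fun x => (A x).blockDiag' j) n x := by
  by_contra hcon
  rw [not_exists] at hcon
  have hcontract (j : Fin r) := (ae_growsAtRate_or_exists_ae_norm_le_pow hθ
    (stronglyMeasurable_blockDiag' hAm j) ρ).resolve_left (hcon j)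
  choose t ht htρ hcontract using hcontract
  obtain ⟨i, hi⟩ := Finite.exists_max t
  obtain ⟨s, hts, hsρ⟩ := exists_between (htρ i)
  have hs : 0 < s := (ht i).trans hts
  obtain ⟨L, hL⟩ := exists_frequently_norm_cocycleProd_le_of_ae_norm_le_pow hθ.toMeasurePreserving
    hAm hfin hA (ht i) (fun j => (hcontract j).mono fun x ⟨m, hm1, hm⟩ =>
      ⟨m, hm1, hm.trans (pow_le_pow_left₀ (ht j).le (hi j) m)⟩) hts
  obtain ⟨x, hx, hgx⟩ := (hL.and_eventually hgrow).exists
  obtain ⟨n, hn, hn'⟩ := (hx.and_eventually (hgx.eventually_lt_norm hs hsρ L)).exists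
  exact hn'.not_ge hn

end BlockTriangularCocycle

/-! ### Extremal measures -/

section MatrixNormEquivalence

variable {d : ℕ}

/-- The space of `d × d` matrices, normed by `ν` instead of the operator norm. -/
def MatrixNorm.Space (_ : MatrixNorm d) : Type := Matrix (Fin d) (Fin d) ℂ

namespace MatrixNorm

variable (ν : MatrixNorm d)

instance : AddCommGroup ν.Space := inferInstanceAs (AddCommGroup (Matrix (Fin d) (Fin d) ℂ))

instance : Module ℂ ν.Space := inferInstanceAs (Module ℂ (Matrix (Fin d) (Fin d) ℂ))

instance : FiniteDimensional ℂ ν.Space :=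
  inferInstanceAs (FiniteDimensional ℂ (Matrix (Fin d) (Fin d) ℂ))

instance : NormedAddCommGroup ν.Space :=
  AddGroupNorm.toNormedAddCommGroup
    { toFun := ν.N
      map_zero' := (ν.definite 0).2 rfl
      add_le' := ν.triangle
      neg' := fun A =>
        (congrArg ν.N (neg_one_smul ℂ A).symm).trans ((ν.homog (-1) A).trans (by simp))
      eq_zero_of_map_eq_zero' := fun A => (ν.definite A).1 }

instance : NormedSpace ℂ ν.Space where
  norm_smul_le c A := (ν.homog c A).le

theorem isBigO_norm : ν.N =O[⊤] fun A : Matrix (Fin d) (Fin d) ℂ => A :=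
  let f : Matrix (Fin d) (Fin d) ℂ →ₗ[ℂ] ν.Space := LinearMap.id
  (f.toContinuousLinearMap.isBigO_id ⊤).norm_left

theorem norm_isBigO : (fun A : Matrix (Fin d) (Fin d) ℂ => A) =O[⊤] ν.N :=
  let f : ν.Space →ₗ[ℂ] Matrix (Fin d) (Fin d) ℂ := LinearMap.id
  (f.toContinuousLinearMap.isBigO_id ⊤).norm_right

end MatrixNorm

end MatrixNormEquivalence

section GrowsAtRate

variable {ρ : ℝ} {y : ℕ → ℝ}

theorem growsAtRate_of_tendsto_rpow_inv (hy : ∀ n, 0 ≤ y n)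
    (h : Tendsto (fun n : ℕ => y n ^ (n : ℝ)⁻¹) atTop (𝓝 ρ)) : GrowsAtRate ρ y := by
  refine fun t ht htρ => .of_bound 1 ?_
  filter_upwards [h.eventually_const_lt htρ, eventually_ne_atTop 0] with n hn hn0
  have hpow := pow_le_pow_left₀ ht.le hn.le n
  rw [Real.rpow_inv_natCast_pow (hy n) hn0] at hpow
  simpa [abs_of_pos ht, abs_of_nonneg (hy n)] using hpow

theorem GrowsAtRate.tendsto_rpow_inv (hρ : 0 ≤ ρ) (hy : ∀ n, 0 ≤ y n) (hlower : GrowsAtRate ρ y)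
    (hupper : ∀ r, ρ < r → y =O[atTop] fun n => r ^ n) :
    Tendsto (fun n : ℕ => y n ^ (n : ℝ)⁻¹) atTop (𝓝 ρ) := by
  have hpow {n : ℕ} (hn : n ≠ 0) : (y n ^ (n : ℝ)⁻¹) ^ n = y n :=
    Real.rpow_inv_natCast_pow (hy n) hn
  have hnonneg (n : ℕ) : 0 ≤ y n ^ (n : ℝ)⁻¹ := Real.rpow_nonneg (hy n) _
  refine tendsto_order.2 ⟨fun a ha => ?_, fun b hb => ?_⟩
  · rcases lt_or_ge a 0 with ha0 | ha0
    · exact .of_forall fun n => ha0.trans_le (hnonneg n)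
    · obtain ⟨t, hat, htρ⟩ := exists_between ha
      filter_upwards [hlower.eventually_lt_norm (ha0.trans_lt hat) htρ 1, eventually_ne_atTop 0]
        with n hn hn0
      refine hat.trans (lt_of_pow_lt_pow_left₀ n (hnonneg n) ?_)
      simpa [hpow hn0, abs_of_nonneg (hy n)] using hn
  · obtain ⟨r, hρr, hrb⟩ := exists_between hb
    have hlittle := (hupper r hρr).trans_isLittleO
      (isLittleO_pow_pow_of_lt_left (hρ.trans hρr.le) hrb)
    filter_upwards [hlittle.def one_half_pos, eventually_ne_atTop 0] with n hn hn0
    refine lt_of_pow_lt_pow_left₀ n (hρ.trans hb.le) ?_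
    have hbn : 0 < b ^ n := pow_pos (hρ.trans_lt hb) n
    rw [hpow hn0]
    rw [Real.norm_of_nonneg (hy n), Real.norm_of_nonneg hbn.le] at hn
    linarith

end GrowsAtRate

section WordProd

variable {d m K : ℕ} {μ : Measure (ℕ → Fin K)}

theorem wordProd_eq_cocycleProd (S : Fin K → Matrix (Fin d) (Fin d) ℂ) (x : ℕ → Fin K) (n : ℕ) :
    wordProd S x n = cocycleProd (shift K) (fun x => S (x 0)) n x := by
  induction n generalizing x with
  | zero => rfl
  | succ n ih => rw [cocycleProd_succ, ← ih]; simp [wordProd, List.ofFn_succ, shift]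

theorem IrreducibleFamily.isBigO_wordProd {F : Fin K → Matrix (Fin m) (Fin m) ℂ}
    (hF : IrreducibleFamily F) {s : ℝ} (hs : genSpecRad F < s) (x : ℕ → Fin K) :
    wordProd F x =O[atTop] fun n => s ^ n := by
  have h := (hF.isBigO_list_map_prod hs).comp_tendsto
    (k := fun n => List.ofFn fun t : Fin n => x t) (l' := atTop) tendsto_top
  simp only [Function.comp_def, List.map_ofFn, List.length_ofFn] at h
  exact h

theorem IrreducibleFamily.isExtremal_of_ae_growsAtRate [NeZero μ]
    {F : Fin K → Matrix (Fin m) (Fin m) ℂ} (hF : IrreducibleFamily F) {ρ : ℝ}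
    (hρ : genSpecRad F ≤ ρ) (hgrow : ∀ᵐ x ∂μ, GrowsAtRate ρ (wordProd F x)) :
    ρ = genSpecRad F ∧ ∀ ν : MatrixNorm m, IsExtremal F ν.N μ := by
  obtain rfl : ρ = genSpecRad F := by
    refine hρ.antisymm' (le_of_not_gt fun hlt => ?_)
    obtain ⟨s, hFs, hsρ⟩ := exists_between hlt
    have hs : 0 < s := (genSpecRad_nonneg F).trans_lt hFs
    obtain ⟨x, hx⟩ := hgrow.exists
    obtain ⟨L, hL⟩ := (hF.isBigO_wordProd hFs x).bound
    obtain ⟨n, hle, hlt⟩ := (hL.and (hx.eventually_lt_norm hs hsρ L)).exists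
    rw [Real.norm_of_nonneg (pow_nonneg hs.le n)] at hle
    exact hlt.not_ge hle
  refine ⟨rfl, fun ν => hgrow.mono fun x hx => ?_⟩
  refine GrowsAtRate.tendsto_rpow_inv (genSpecRad_nonneg F) (fun n => ν.nonneg _)
    (hx.of_isBigO (ν.norm_isBigO.comp_tendsto tendsto_top))
    fun s hs => (ν.isBigO_norm.comp_tendsto tendsto_top).trans (hF.isBigO_wordProd hs x)

theorem IsExtremal.exists_extremal_block [IsProbabilityMeasure μ] {r : ℕ} [Nonempty (Fin r)]
    {n : Fin r → ℕ} {S : Fin K → Matrix (Fin d) (Fin d) ℂ} {ν : MatrixNorm d}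
    (hext : IsExtremal S ν.N μ) (hμ : Ergodic (shift K) μ)
    (φ : Matrix (Fin d) (Fin d) ℂ ≃ₐ[ℂ] Matrix (Σ j, Fin (n j)) (Σ j, Fin (n j)) ℂ)
    (htri : ∀ k, (φ (S k)).BlockTriangular fun x => OrderDual.toDual x.1)
    (hirr : ∀ j, IrreducibleFamily fun k => (φ (S k)).blockDiag' j) :
    ∃ j, genSpecRad S = genSpecRad (fun k => (φ (S k)).blockDiag' j) ∧
      ∀ ν' : MatrixNorm (n j), IsExtremal (fun k => (φ (S k)).blockDiag' j) ν'.N μ := by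
  let A (x : ℕ → Fin K) : Matrix (Σ j, Fin (n j)) (Σ j, Fin (n j)) ℂ := φ (S (x 0))
  have hAm : StronglyMeasurable A :=
    (StronglyMeasurable.of_discrete (f := fun k => φ (S k))).comp_measurable (measurable_pi_apply 0)
  have hgrow : ∀ᵐ x ∂μ, GrowsAtRate (genSpecRad S) fun n => cocycleProd (shift K) A n x := by
    filter_upwards [hext] with x hx
    have hN := growsAtRate_of_tendsto_rpow_inv (fun _ => ν.nonneg _) hx
    refine (hN.of_isBigO (ν.isBigO_norm.comp_tendsto tendsto_top)).of_isBigO ?_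
    have hφ (n : ℕ) : wordProd S x n = φ.symm (cocycleProd (shift K) A n x) := by
      simp [wordProd_eq_cocycleProd, map_cocycleProd, A]
    exact funext hφ ▸ φ.symm.toLinearMap.toContinuousLinearMap.isBigO_comp
      (fun n => cocycleProd (shift K) A n x) atTop
  obtain ⟨j, hj⟩ := exists_block_ae_growsAtRate hμ hAm
    ((Set.finite_range fun k => φ (S k)).subset (Set.range_subset_iff.2 fun x => ⟨x 0, rfl⟩))
    (fun x => htri (x 0)) hgrow
  refine ⟨j, (hirr j).isExtremal_of_ae_growsAtRate (genSpecRad_blockDiag'_le φ htri j) ?_⟩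
  exact hj.mono fun x hx => funext (wordProd_eq_cocycleProd _ x) ▸ hx

end WordProd

/-- Ergodic reduction theorem: for an extremal ergodic measure `μ` of `S`, after a
simultaneous similarity `P⁻¹ S_k P` the family becomes block lower-triangular with
irreducible diagonal blocks, and for some block `j` one has `ρ(S) = ρ(S̃(j))` with `μ`
also extremal for `S̃(j)`. -/
theorem ergodic_reduction_to_irreducible_blocks
    {d K : ℕ} (hd : 2 ≤ d) (hK : 2 ≤ K)
    (S : Fin K → Matrix (Fin d) (Fin d) ℂ) (ν : MatrixNorm d)
    (μ : Measure (ℕ → Fin K)) [IsProbabilityMeasure μ]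
    (hergo : Ergodic (shift K) μ) (hext : IsExtremal S ν.N μ) :
    ∃ (P : Matrix (Fin d) (Fin d) ℂ), IsUnit P ∧
    ∃ (r : ℕ), 1 ≤ r ∧ r ≤ d ∧
    ∃ (sizes : Fin r → ℕ) (emb : (j : Fin r) → Fin (sizes j) → Fin d),
      (∀ j, 1 ≤ sizes j) ∧
      (∑ j, sizes j) = d ∧
      -- `emb` lays out the blocks consecutively: within each block it is strictly
      -- monotone, blocks appear in order, and together they exhaust `Fin d`.
      (∀ j, StrictMono (emb j)) ∧
      (∀ j j' : Fin r, j < j' → ∀ a b, emb j a < emb j' b) ∧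
      (∀ i : Fin d, ∃ j a, emb j a = i) ∧
      -- block lower-triangular form of each `P⁻¹ S_k P`
      (∀ k, ∀ j j' : Fin r, j < j' →
        ∀ a b, (P⁻¹ * S k * P) (emb j a) (emb j' b) = 0) ∧
      -- each diagonal-block family is irreducible
      (∀ j, IrreducibleFamily fun k => (P⁻¹ * S k * P).submatrix (emb j) (emb j)) ∧
      -- some block realizes the generalized spectral radius and keeps `μ` extremal
      (∃ j : Fin r,
        genSpecRad S = genSpecRad (fun k => (P⁻¹ * S k * P).submatrix (emb j) (emb j)) ∧
        ∀ ν' : MatrixNorm (sizes j),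
          IsExtremal (fun k => (P⁻¹ * S k * P).submatrix (emb j) (emb j)) ν'.N μ) := by
  obtain ⟨r, sizes, B, hpos, htri, hirr⟩ :=
    exists_basis_blockTriangular_irreducible fun k => Matrix.toLinAlgEquiv' (S k)
  have hsum : ∑ j, sizes j = d := by simpa using (Module.finrank_eq_card_basis B).symm
  have hrd : r ≤ d := by
    simpa [hsum] using Finset.card_nsmul_le_sum Finset.univ sizes 1 fun j _ => hpos j
  have hr : 1 ≤ r :=
    Nat.pos_of_ne_zero <| by rintro rfl; rw [Fin.sum_univ_zero] at hsum; omega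
  have : Nonempty (Fin r) := ⟨⟨0, hr⟩⟩
  obtain ⟨e, hmono, hlt⟩ := exists_sigma_fin_equiv_fin_strictMono hsum
  obtain ⟨P, hP, hPS⟩ := exists_isUnit_inv_mul_mul_submatrix_eq_toMatrix B e
  have hzero (k : Fin K) (i j : Fin r) (h : i < j) (a : Fin (sizes i)) (b : Fin (sizes j)) :
      (P⁻¹ * S k * P) (e ⟨i, a⟩) (e ⟨j, b⟩) = 0 :=
    (congrFun₂ (hPS (S k)) ⟨i, a⟩ ⟨j, b⟩).trans (htri k h)
  let φ := Matrix.toLinAlgEquiv'.trans (LinearMap.toMatrixAlgEquiv B)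
  have hblock (k : Fin K) (j : Fin r) :
      (P⁻¹ * S k * P).submatrix (fun a => e ⟨j, a⟩) (fun a => e ⟨j, a⟩) =
        (φ (S k)).blockDiag' j :=
    congrArg (Matrix.blockDiag' · j) (hPS (S k))
  refine ⟨P, hP, r, hr, hrd, sizes, fun j a => e ⟨j, a⟩, hpos, hsum, hmono, hlt,
    fun i => ⟨(e.symm i).1, (e.symm i).2, e.apply_symm_apply i⟩, hzero, ?_⟩
  simp only [hblock]
  exact ⟨hirr, hext.exists_extremal_block hergo φ htri hirr⟩
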